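/- (Theorem 1, MCSD adaptation bound) Fix ρ > 0. For any scoring function f ∈ F and distributions P (source) and Q (target) over X × Y, E_Q(h_f) ≤ E^ρ_P(f) + d^ρ_MCSD(P_x, Q_x) + λ, where d^ρ_MCSD(P_x, Q_x) = sup_{f', f'' ∈ F} [MCSD^ρ_{Q_x}(f', f'') − MCSD^ρ_{P_x}(f', f'')] and λ = min_{g ∈ F} (E^ρ_P(g) + E^ρ_Q(g)) (assumed attained by some f* ∈ F). -/

import Mathlib

/-!
The bound follows by passing through the minimiser `fstar` of the joint error:
`E_Q(h_f) ≤ E_Q(fstar) + MCSD_Q(f, fstar)`, the discrepancy `MCSD_Q(f, fstar)` exceeds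
`MCSD_P(f, fstar)` by at most the supremum, and `MCSD_P(f, fstar) ≤ E_P(f) + E_P(fstar)`.

The two outer inequalities are integrals of pointwise ones, `indicator_le` and `l1diff_le`.
Both rest on the row formula `l1diff_eq`: row `i` of `M(u) - M(v)` has `K - 1` entries
`Φ(-u i) - Φ(-v i)` and one entry `Φ(u i) - Φ(v i)`. The only properties of the ramp loss `Φ`
needed are that it is antitone, takes values in `[0, 1]` and equals `1` on `(-∞, 0]`; in
particular, one of `Φ(t)` and `Φ(-t)` is always `1`.
-/

open MeasureTheory Finset

/-- The ramp loss with margin `ρ`. -/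
noncomputable def ramp (ρ x : ℝ) : ℝ :=
  if ρ ≤ x then 0 else if x ≤ 0 then 1 else 1 - x / ρ

/-- The absolute margin function: `margin w y k = w k` if `k = y`, else `-w k`. -/
def margin {K : ℕ} (w : Fin K → ℝ) (y k : Fin K) : ℝ :=
  if k = y then w k else -w k

/-- Entrywise L1 distance between the matrices of absolute margin violations
`M^ρ(u)` and `M^ρ(v)`, where `M^ρ_{i,j}(w) = Φ_ρ(μ_i(w,j))`. -/
noncomputable def l1diff (ρ : ℝ) {K : ℕ} (u v : Fin K → ℝ) : ℝ :=
  ∑ i : Fin K, ∑ j : Fin K, |ramp ρ (margin u j i) - ramp ρ (margin v j i)|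

/-- The margin-based multi-class loss `L^ρ(w, y) = ∑_k Φ_ρ(μ_k(w,y))`. -/
noncomputable def Lmargin (ρ : ℝ) {K : ℕ} (w : Fin K → ℝ) (y : Fin K) : ℝ :=
  ∑ k : Fin K, ramp ρ (margin w y k)

lemma ramp_nonneg {ρ : ℝ} (hρ : 0 < ρ) (x : ℝ) : 0 ≤ ramp ρ x := by
  unfold ramp
  split_ifs with h1 h2
  · exact le_rfl
  · exact zero_le_one
  · have : x / ρ ≤ 1 := (div_le_one hρ).2 (by linarith)
    linarith

lemma ramp_of_nonpos {ρ : ℝ} (hρ : 0 < ρ) {x : ℝ} (hx : x ≤ 0) : ramp ρ x = 1 := by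
  unfold ramp
  rw [if_neg (by linarith), if_pos hx]

lemma ramp_le_one {ρ : ℝ} (hρ : 0 < ρ) (x : ℝ) : ramp ρ x ≤ 1 := by
  unfold ramp
  split_ifs with h1 h2
  · exact zero_le_one
  · exact le_rfl
  · have : 0 ≤ x / ρ := div_nonneg (by linarith) hρ.le
    linarith

lemma ramp_anti {ρ : ℝ} (hρ : 0 < ρ) {x y : ℝ} (hxy : x ≤ y) : ramp ρ y ≤ ramp ρ x := by
  rcases le_or_gt x 0 with hx | hx
  · rw [ramp_of_nonpos hρ hx]
    exact ramp_le_one hρ y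
  rcases le_or_gt ρ y with hy | hy
  · have : ramp ρ y = 0 := by simp [ramp, hy]
    rw [this]
    exact ramp_nonneg hρ x
  · have h : x / ρ ≤ y / ρ := by gcongr
    unfold ramp
    rw [if_neg (by linarith), if_neg (by linarith), if_neg (by linarith), if_neg (by linarith)]
    linarith

lemma ramp_abs_sub_le {ρ : ℝ} (hρ : 0 < ρ) (a b : ℝ) :
    |ramp ρ a - ramp ρ b| ≤ ramp ρ a + ramp ρ b := by
  have := ramp_nonneg hρ a
  have := ramp_nonneg hρ b
  rw [abs_le]
  constructor <;> linarith

/-- If the left side is nonzero then `a` or `b` is positive, so the right side is at least `1`. -/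
lemma ramp_abs_sub_le_neg {ρ : ℝ} (hρ : 0 < ρ) (a b : ℝ) :
    |ramp ρ a - ramp ρ b| ≤ ramp ρ (-a) + ramp ρ (-b) := by
  have h1 := ramp_nonneg hρ a
  have h2 := ramp_nonneg hρ b
  have h3 := ramp_nonneg hρ (-a)
  have h4 := ramp_nonneg hρ (-b)
  have h5 := ramp_le_one hρ a
  have h6 := ramp_le_one hρ b
  have hone : |ramp ρ a - ramp ρ b| ≤ 1 := by
    rw [abs_le]
    constructor <;> linarith
  rcases le_or_gt a 0 with ha | ha
  · rcases le_or_gt b 0 with hb | hb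
    · rw [ramp_of_nonpos hρ ha, ramp_of_nonpos hρ hb, sub_self, abs_zero]
      linarith
    · have := ramp_of_nonpos hρ (x := -b) (by linarith)
      linarith
  · have := ramp_of_nonpos hρ (x := -a) (by linarith)
    linarith

/-- Sum of `l1diff` by rows: each row has one diagonal entry and `K - 1` equal others. -/
lemma l1diff_eq (ρ : ℝ) {K : ℕ} (u v : Fin K → ℝ) :
    l1diff ρ u v = ∑ i : Fin K, (((K : ℝ) - 1) * |ramp ρ (-u i) - ramp ρ (-v i)|
      + |ramp ρ (u i) - ramp ρ (v i)|) := by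
  unfold l1diff
  refine Finset.sum_congr rfl fun i _ => ?_
  have h : ∀ j : Fin K, |ramp ρ (margin u j i) - ramp ρ (margin v j i)|
      = |ramp ρ (-u i) - ramp ρ (-v i)| + if i = j then
        (|ramp ρ (u i) - ramp ρ (v i)| - |ramp ρ (-u i) - ramp ρ (-v i)|) else 0 := by
    intro j
    unfold margin
    split_ifs <;> ring
  simp only [h, Finset.sum_add_distrib, Finset.sum_const, Finset.card_univ, Fintype.card_fin,
    nsmul_eq_mul, Finset.sum_ite_eq, Finset.mem_univ, if_true]
  ring

lemma l1diff_le {ρ : ℝ} (hρ : 0 < ρ) {K : ℕ} (hK : 2 ≤ K) (u v : Fin K → ℝ) (y : Fin K) :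
    1 / (K : ℝ) * l1diff ρ u v ≤ Lmargin ρ u y + Lmargin ρ v y := by
  have hK' : (2 : ℝ) ≤ K := by exact_mod_cast hK
  rw [one_div, inv_mul_le_iff₀ (by linarith), l1diff_eq]
  unfold Lmargin
  rw [← Finset.sum_add_distrib, Finset.mul_sum]
  refine Finset.sum_le_sum fun i _ => ?_
  -- Both kinds of entries of row `i` are bounded by the `i`-th term on the right.
  have hA : |ramp ρ (-u i) - ramp ρ (-v i)| ≤ ramp ρ (margin u y i) + ramp ρ (margin v y i) := by
    unfold margin
    split_ifs
    · simpa using ramp_abs_sub_le_neg hρ (-u i) (-v i)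
    · exact ramp_abs_sub_le hρ _ _
  have hB : |ramp ρ (u i) - ramp ρ (v i)| ≤ ramp ρ (margin u y i) + ramp ρ (margin v y i) := by
    unfold margin
    split_ifs
    · exact ramp_abs_sub_le hρ _ _
    · exact ramp_abs_sub_le_neg hρ _ _
  have := mul_le_mul_of_nonneg_left hA (show (0 : ℝ) ≤ K - 1 by linarith)
  linarith

/-- The 0-1 loss of the label `h` maximising `u` is controlled by the margin loss of any other
score `v`. When `h ≠ y`, rows `h` and `y` alone suffice. -/
lemma indicator_le {ρ : ℝ} (hρ : 0 < ρ) {K : ℕ} (hK : 2 ≤ K) (u v : Fin K → ℝ) (h y : Fin K)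
    (hsum : ∑ k, u k = 0) (hmax : ∀ k, u k ≤ u h) :
    (if h ≠ y then (1 : ℝ) else 0) ≤ Lmargin ρ v y + 1 / (K : ℝ) * l1diff ρ u v := by
  have hK' : (2 : ℝ) ≤ K := by exact_mod_cast hK
  have hrow : ∀ i, 0 ≤ ((K : ℝ) - 1) * |ramp ρ (-u i) - ramp ρ (-v i)|
      + |ramp ρ (u i) - ramp ρ (v i)| := fun i =>
    add_nonneg (mul_nonneg (by linarith) (abs_nonneg _)) (abs_nonneg _)
  have hL : ∀ k ∈ Finset.univ, 0 ≤ ramp ρ (margin v y k) := fun k _ => ramp_nonneg hρ _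
  split_ifs with hne
  · -- The maximum of scores summing to zero is nonnegative.
    have huh : 0 ≤ u h := by
      by_contra! hneg
      have := Finset.sum_le_sum fun k (_ : k ∈ Finset.univ) => hmax k
      rw [hsum, Finset.sum_const, Finset.card_univ, Fintype.card_fin, nsmul_eq_mul] at this
      nlinarith
    have h1 : ramp ρ (-v h) + ramp ρ (v y) ≤ Lmargin ρ v y := by
      have := Finset.add_le_sum hL (Finset.mem_univ h) (Finset.mem_univ y) hne
      simpa [Lmargin, margin, hne] using this
    have h2 := Finset.add_le_sum (fun i _ => hrow i) (Finset.mem_univ h) (Finset.mem_univ y) hne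
    rw [← l1diff_eq] at h2
    have hu1 : ramp ρ (-u h) = 1 := ramp_of_nonpos hρ (by linarith)
    have hA : 1 - ramp ρ (-v h) ≤ |ramp ρ (-u h) - ramp ρ (-v h)| := by
      rw [hu1]
      exact le_abs_self _
    have hA' := mul_le_mul_of_nonneg_left hA (show (0 : ℝ) ≤ K - 1 by linarith)
    have hAy := mul_nonneg (show (0 : ℝ) ≤ K - 1 by linarith)
      (abs_nonneg (ramp ρ (-u y) - ramp ρ (-v y)))
    have hBy : ramp ρ (u y) - ramp ρ (v y) ≤ |ramp ρ (u y) - ramp ρ (v y)| := le_abs_self _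
    have huy := ramp_anti hρ (hmax y)
    have hvy := mul_nonneg (show (0 : ℝ) ≤ K - 1 by linarith) (ramp_nonneg hρ (v y))
    -- `K * Φ(-v h)` plus row `h` falls short of `K` by at most `Φ(u h) ≤ Φ(u y)`, and
    -- `K * Φ(v y)` plus row `y` is at least `Φ(u y)`.
    have hBh : 1 ≤ ramp ρ (-v h) + |ramp ρ (u h) - ramp ρ (v h)| + ramp ρ (u h) := by
      have ha := abs_nonneg (ramp ρ (u h) - ramp ρ (v h))
      have hb := neg_abs_le (ramp ρ (u h) - ramp ρ (v h))
      have hc := ramp_nonneg hρ (u h)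
      have hd := ramp_nonneg hρ (-v h)
      rcases le_or_gt (v h) 0 with hv | hv
      · rw [ramp_of_nonpos hρ hv] at hb ⊢
        linarith
      · rw [ramp_of_nonpos hρ (x := -v h) (by linarith)]
        linarith
    have h3 := mul_le_mul_of_nonneg_left h1 (show (0 : ℝ) ≤ K by linarith)
    have key : (K : ℝ) * (1 - Lmargin ρ v y) ≤ l1diff ρ u v := by linarith
    have h4 := (le_inv_mul_iff₀ (show (0 : ℝ) < K by linarith)).2 key
    rw [one_div]
    linarith
  · refine add_nonneg (Finset.sum_nonneg hL) (mul_nonneg (by positivity) ?_)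
    rw [l1diff_eq]
    exact Finset.sum_nonneg fun i _ => hrow i


theorem theorem1_mcsd_bound {X : Type*} [MeasurableSpace X] {K : ℕ} (hK : 2 ≤ K)
    (ρ : ℝ) (hρ : 0 < ρ)
    (P Q : Measure (X × Fin K)) (hP : IsProbabilityMeasure P) (hQ : IsProbabilityMeasure Q)
    (F : Set (X → Fin K → ℝ))
    (hFsum : ∀ g ∈ F, ∀ x, ∑ k : Fin K, g x k = 0)
    (f : X → Fin K → ℝ) (hfF : f ∈ F)
    (hf : X → Fin K) (hmax : ∀ x k, f x k ≤ f x (hf x))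
    (hint1 : Integrable (fun p : X × Fin K => if hf p.1 ≠ p.2 then (1 : ℝ) else 0) Q)
    (hintP : ∀ g ∈ F, Integrable (fun p : X × Fin K => Lmargin ρ (g p.1) p.2) P)
    (hintQ : ∀ g ∈ F, Integrable (fun p : X × Fin K => Lmargin ρ (g p.1) p.2) Q)
    (hintMP : ∀ g ∈ F, ∀ g' ∈ F,
      Integrable (fun p : X × Fin K => l1diff ρ (g p.1) (g' p.1)) P)
    (hintMQ : ∀ g ∈ F, ∀ g' ∈ F,
      Integrable (fun p : X × Fin K => l1diff ρ (g p.1) (g' p.1)) Q)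
    (fstar : X → Fin K → ℝ) (hfstarF : fstar ∈ F)
    (hfstarmin : ∀ g ∈ F,
      (∫ p, Lmargin ρ (fstar p.1) p.2 ∂P) + (∫ p, Lmargin ρ (fstar p.1) p.2 ∂Q) ≤
      (∫ p, Lmargin ρ (g p.1) p.2 ∂P) + (∫ p, Lmargin ρ (g p.1) p.2 ∂Q))
    (hbdd : BddAbove {d : ℝ | ∃ g ∈ F, ∃ g' ∈ F, d =
        (1 / (K : ℝ)) * (∫ p, l1diff ρ (g p.1) (g' p.1) ∂Q) -
        (1 / (K : ℝ)) * (∫ p, l1diff ρ (g p.1) (g' p.1) ∂P)}) :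
    (∫ p, (if hf p.1 ≠ p.2 then (1 : ℝ) else 0) ∂Q) ≤
      (∫ p, Lmargin ρ (f p.1) p.2 ∂P) +
      sSup {d : ℝ | ∃ g ∈ F, ∃ g' ∈ F, d =
        (1 / (K : ℝ)) * (∫ p, l1diff ρ (g p.1) (g' p.1) ∂Q) -
        (1 / (K : ℝ)) * (∫ p, l1diff ρ (g p.1) (g' p.1) ∂P)} +
      ((∫ p, Lmargin ρ (fstar p.1) p.2 ∂P) + (∫ p, Lmargin ρ (fstar p.1) p.2 ∂Q)) := by
  have hPle : 1 / (K : ℝ) * (∫ p, l1diff ρ (f p.1) (fstar p.1) ∂P) ≤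
      (∫ p, Lmargin ρ (f p.1) p.2 ∂P) + (∫ p, Lmargin ρ (fstar p.1) p.2 ∂P) := by
    rw [← integral_const_mul, ← integral_add (hintP f hfF) (hintP fstar hfstarF)]
    exact integral_mono ((hintMP f hfF fstar hfstarF).const_mul _)
      ((hintP f hfF).add (hintP fstar hfstarF)) fun p => l1diff_le hρ hK _ _ _
  have hQle : (∫ p, (if hf p.1 ≠ p.2 then (1 : ℝ) else 0) ∂Q) ≤
      (∫ p, Lmargin ρ (fstar p.1) p.2 ∂Q) +
        1 / (K : ℝ) * (∫ p, l1diff ρ (f p.1) (fstar p.1) ∂Q) := by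
    have hM := (hintMQ f hfF fstar hfstarF).const_mul (1 / (K : ℝ))
    rw [← integral_const_mul, ← integral_add (hintQ fstar hfstarF) hM]
    exact integral_mono hint1 ((hintQ fstar hfstarF).add hM) fun p =>
      indicator_le hρ hK _ _ _ _ (hFsum f hfF p.1) (hmax p.1)
  have hsup := le_csSup hbdd ⟨f, hfF, fstar, hfstarF, rfl⟩
  linarith
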